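/- arXiv:2211.00726 — 9 statements merged into one kernel-verified Lean document; each statement's English description precedes it below -/
import Mathlib

section
/- Let B₋, B₊ be nonzero real numbers and B ∈ 𝔖(B₋, B₊), and define A₂ : ℝ → ℝ by A₂(x) = x·B(x). Then the function (x, ξ, ζ) ↦ √(1 + ξ² + (ζ − A₂(x))²) is an order function on ℝ³: there exist constants C > 0 and N > 0 such that for all (x₁, ξ₁, ζ₁), (x₂, ξ₂, ζ₂) ∈ ℝ³ one has √(1 + ξ₁² + (ζ₁ − A₂(x₁))²) ≤ C · (1 + (x₂ − x₁)² + (ξ₂ − ξ₁)² + (ζ₂ − ζ₁)²)^(N/2) · √(1 + ξ₂² + (ζ₂ − A₂(x₂))²). -/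
/-- A switch function: smooth, equal to `c` near `-∞` and to `d` near `+∞`. -/
def IsSwitch (c d : ℝ) (f : ℝ → ℝ) : Prop :=
  ContDiff ℝ (⊤ : ℕ∞) f ∧ ∃ α β : ℝ, α < β ∧ (∀ x ≤ α, f x = c) ∧ (∀ x, β ≤ x → f x = d)

theorem A_almost_lip (Bm Bp : ℝ) (B : ℝ → ℝ) (hB : IsSwitch Bm Bp B) :
    ∃ K : ℝ, 0 ≤ K ∧ ∀ x y : ℝ, |x * B x - y * B y| ≤ K * (1 + |x - y|) := by
  obtain ⟨hs, α, β, hab, hα, hβ⟩ := hB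
  have hc : Continuous B := hs.continuous
  let r : ℝ → ℝ := fun x => x * B x - (Bm * min x 0 + Bp * max x 0)
  have hr : Continuous r := by
    show Continuous fun x => x * B x - (Bm * min x 0 + Bp * max x 0)
    fun_prop
  obtain ⟨R, hR⟩ := (isCompact_Icc (a := min α 0) (b := max β 0)).exists_bound_of_continuousOn
    hr.continuousOn
  have hR0 : 0 ≤ R := (norm_nonneg _).trans (hR 0 ⟨min_le_right _ _, le_max_right _ _⟩)
  have hb : ∀ x, |r x| ≤ R := by
    intro x
    by_cases h1 : x < min α 0
    · have h2 := lt_min_iff.1 h1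
      have : r x = 0 := by
        simp only [r]
        rw [hα x h2.1.le, min_eq_left h2.2.le, max_eq_right h2.2.le]; ring
      rw [this, abs_zero]; exact hR0
    by_cases h3 : max β 0 < x
    · have h2 := max_lt_iff.1 h3
      have : r x = 0 := by
        simp only [r]
        rw [hβ x h2.1.le, min_eq_right h2.2.le, max_eq_left h2.2.le]; ring
      rw [this, abs_zero]; exact hR0
    exact hR x ⟨not_lt.1 h1, not_lt.1 h3⟩
  refine ⟨2 * R + |Bm| + |Bp|, by positivity, fun x y => ?_⟩
  have e : x * B x - y * B y =
      (r x - r y) + (Bm * (min x 0 - min y 0) + Bp * (max x 0 - max y 0)) := by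
    simp only [r]; ring
  have m1 : |min x 0 - min y 0| ≤ |x - y| := by
    have := abs_min_sub_min_le_max x 0 y 0
    simpa using this
  have m2 : |max x 0 - max y 0| ≤ |x - y| := by
    have := abs_max_sub_max_le_max x 0 y 0
    simpa using this
  have t1 := abs_add_le (r x - r y) (Bm * (min x 0 - min y 0) + Bp * (max x 0 - max y 0))
  have t2 := abs_add_le (Bm * (min x 0 - min y 0)) (Bp * (max x 0 - max y 0))
  have t3 := abs_sub (r x) (r y)
  rw [abs_mul, abs_mul] at t2
  have u1 := mul_le_mul_of_nonneg_left m1 (abs_nonneg Bm)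
  have u2 := mul_le_mul_of_nonneg_left m2 (abs_nonneg Bp)
  have u3 := mul_nonneg hR0 (abs_nonneg (x - y))
  rw [e]
  have := hb x
  have := hb y
  have := abs_nonneg Bm
  have := abs_nonneg Bp
  nlinarith

/-- `√(1 + ξ² + (ζ − A₂(x))²)` is an order function on `ℝ³`. -/
theorem order_function (Bm Bp : ℝ) (hBm : Bm ≠ 0) (hBp : Bp ≠ 0)
    (B : ℝ → ℝ) (hB : IsSwitch Bm Bp B)
    (A₂ : ℝ → ℝ) (hA₂ : ∀ x, A₂ x = x * B x) :
    ∃ C N : ℝ, 0 < C ∧ 0 < N ∧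
      ∀ x₁ ξ₁ ζ₁ x₂ ξ₂ ζ₂ : ℝ,
        Real.sqrt (1 + ξ₁ ^ 2 + (ζ₁ - A₂ x₁) ^ 2) ≤
          C * (1 + (x₂ - x₁) ^ 2 + (ξ₂ - ξ₁) ^ 2 + (ζ₂ - ζ₁) ^ 2) ^ (N / 2) *
            Real.sqrt (1 + ξ₂ ^ 2 + (ζ₂ - A₂ x₂) ^ 2) := by
  obtain ⟨K, hK, hL⟩ := A_almost_lip Bm Bp B hB
  refine ⟨Real.sqrt (6 + 8 * K ^ 2), 1, Real.sqrt_pos.2 (by positivity), one_pos, ?_⟩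
  intro x₁ ξ₁ ζ₁ x₂ ξ₂ ζ₂
  have h := hL x₁ x₂
  rw [← hA₂, ← hA₂] at h
  rw [← Real.sqrt_eq_rpow, ← Real.sqrt_mul (by positivity), ← Real.sqrt_mul (by positivity)]
  apply Real.sqrt_le_sqrt
  have hA : (A₂ x₁ - A₂ x₂) ^ 2 ≤ 2 * K ^ 2 * (1 + (x₂ - x₁) ^ 2) := by
    have h1 : (A₂ x₁ - A₂ x₂) ^ 2 ≤ (K * (1 + |x₁ - x₂|)) ^ 2 := by
      rw [← sq_abs (A₂ x₁ - A₂ x₂)]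
      gcongr
    have h2 : (1 + |x₁ - x₂|) ^ 2 ≤ 2 * (1 + (x₂ - x₁) ^ 2) := by
      nlinarith [sq_abs (x₁ - x₂), sq_nonneg (1 - |x₁ - x₂|)]
    have h3 := mul_le_mul_of_nonneg_left h2 (sq_nonneg K)
    nlinarith
  generalize A₂ x₁ = a at *
  generalize A₂ x₂ = b at *
  have e1 : ξ₁ ^ 2 ≤ 2 * ξ₂ ^ 2 + 2 * (ξ₂ - ξ₁) ^ 2 := by nlinarith [sq_nonneg (2 * ξ₂ - ξ₁)]
  have e2 : (ζ₁ - a) ^ 2 ≤ 2 * (ζ₂ - b) ^ 2 + 4 * (ζ₂ - ζ₁) ^ 2 + 4 * (a - b) ^ 2 := by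
    nlinarith [sq_nonneg ((ζ₂ - b) + (ζ₂ - ζ₁) + (a - b)), sq_nonneg ((ζ₂ - ζ₁) - (a - b))]
  have p1 := sq_nonneg ξ₂
  have p2 := sq_nonneg (ζ₂ - b)
  have p3 := sq_nonneg (x₂ - x₁)
  have p4 := sq_nonneg (ξ₂ - ξ₁)
  have p5 := sq_nonneg (ζ₂ - ζ₁)
  generalize hP : 1 + ξ₂ ^ 2 + (ζ₂ - b) ^ 2 = P
  generalize hD : 1 + (x₂ - x₁) ^ 2 + (ξ₂ - ξ₁) ^ 2 + (ζ₂ - ζ₁) ^ 2 = D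
  have hP1 : 1 ≤ P := by linarith
  have hD1 : 1 ≤ D := by linarith
  have q : K ^ 2 * (1 + (x₂ - x₁) ^ 2) ≤ K ^ 2 * D :=
    mul_le_mul_of_nonneg_left (by linarith) (sq_nonneg K)
  have s1 : P ≤ D * P := le_mul_of_one_le_left (by linarith) hD1
  have s2 : D ≤ D * P := le_mul_of_one_le_right (by linarith) hP1
  have s3 := mul_le_mul_of_nonneg_left s2 (sq_nonneg K)
  calc _ ≤ 2 * P + 4 * D + 8 * (K ^ 2 * D) := by linarith
    _ ≤ 6 * (D * P) + 8 * (K ^ 2 * (D * P)) := by linarith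
    _ = _ := by ring
end

section
/- Let B₋, B₊ be real numbers and B ∈ 𝔖(B₋, B₊). Then there exist positive constants C₁ and C₂ such that for all x₁, x₂ ∈ ℝ, x₁² · (B(x₂) − B(x₁))² ≤ C₁ · (x₂ − x₁)² + C₂. -/
/-- For a switch function `B`, `x₁²(B(x₂) − B(x₁))² ≤ C₁(x₂ − x₁)² + C₂`. -/
theorem switch_difference_bound (Bm Bp : ℝ) (B : ℝ → ℝ) (hB : IsSwitch Bm Bp B) :
    ∃ C₁ C₂ : ℝ, 0 < C₁ ∧ 0 < C₂ ∧
      ∀ x₁ x₂ : ℝ, x₁ ^ 2 * (B x₂ - B x₁) ^ 2 ≤ C₁ * (x₂ - x₁) ^ 2 + C₂ := by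
  obtain ⟨hs, α, β, hαβ, h1, h2⟩ := hB
  obtain ⟨K, hK⟩ := (isCompact_Icc (a := α) (b := β)).exists_bound_of_continuousOn
    hs.continuous.continuousOn
  obtain ⟨M, hM0, hM⟩ : ∃ M : ℝ, 0 < M ∧ ∀ x, |B x| ≤ M := by
    have hα := hK α ⟨le_rfl, hαβ.le⟩
    have hβ := hK β ⟨hαβ.le, le_rfl⟩
    have hKx : ∀ x, |B x| ≤ K := by
      intro x
      rcases le_total x α with h | h
      · rw [h1 x h, ← h1 α le_rfl]; exact hα
      · rcases le_total β x with h' | h'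
        · rw [h2 x h', ← h2 β le_rfl]; exact hβ
        · exact hK x ⟨h, h'⟩
    refine ⟨K + 1, ?_, fun x => (hKx x).trans (by linarith)⟩
    have := (abs_nonneg _).trans (hKx 0)
    linarith
  have hR0 : 0 ≤ |α| + |β| := by positivity
  obtain ⟨R, hR⟩ : ∃ R, R = |α| + |β| + 1 := ⟨_, rfl⟩
  have hRp : 0 < R := by linarith
  refine ⟨8 * M ^ 2, 8 * M ^ 2 * R ^ 2, by positivity, by positivity, ?_⟩
  intro x y
  by_cases hxy : B y = B x
  · rw [hxy, sub_self]
    have : 0 ≤ 8 * M ^ 2 * (y - x) ^ 2 + 8 * M ^ 2 * R ^ 2 := by positivity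
    simpa using this
  have hx : |x| ≤ |y - x| + R := by
    by_contra! hc
    apply hxy
    have a1 := neg_abs_le α
    have a2 := le_abs_self β
    have a3 := abs_nonneg α
    have a4 := abs_nonneg β
    have a5 := neg_abs_le (y - x)
    have a6 := le_abs_self (y - x)
    rcases le_total 0 x with h | h
    · rw [abs_of_nonneg h] at hc
      rw [h2 x (by linarith), h2 y (by linarith)]
    · rw [abs_of_nonpos h] at hc
      rw [h1 x (by linarith), h1 y (by linarith)]
  have e1 : x ^ 2 ≤ 2 * (y - x) ^ 2 + 2 * R ^ 2 := by
    have : |x| ^ 2 ≤ (|y - x| + R) ^ 2 := by gcongr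
    rw [sq_abs] at this
    have h3 := sq_abs (y - x)
    nlinarith [sq_nonneg (|y - x| - R)]
  have e2 : (B y - B x) ^ 2 ≤ 4 * M ^ 2 := by
    have b1 := abs_le.mp (hM x)
    have b2 := abs_le.mp (hM y)
    nlinarith
  calc x ^ 2 * (B y - B x) ^ 2 ≤ (2 * (y - x) ^ 2 + 2 * R ^ 2) * (4 * M ^ 2) := by gcongr
    _ = _ := by ring
end

section
/- Let A₂, m, V : ℝ → ℝ be functions, ζ, μ ∈ ℝ, and suppose the pairs (ψ₁, ψ₂) and (φ₁, φ₂) of differentiable functions ℝ → ℂ both solve the Dirac eigenvalue system with data A₂, m, V, ζ and the same eigenvalue μ. If ψ₁(x), ψ₂(x), φ₁(x), φ₂(x) all tend to 0 as x → +∞, then ψ₁(x)·φ₂(x) − ψ₂(x)·φ₁(x) = 0 for every x ∈ ℝ; in particular, for each x ∈ ℝ the vectors (ψ₁(x), ψ₂(x)) and (φ₁(x), φ₂(x)) in ℂ² are linearly dependent. -/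
/-- `(ψ₁, ψ₂)` solves the Dirac eigenvalue system for the fibered magnetic Dirac operator
`Ĥ(ζ) = D_x σ₁ + (ζ − A₂(x)) σ₂ + m(x) σ₃ + V(x) σ₀` with eigenvalue `μ`. -/
def SolvesDirac (A₂ m V : ℝ → ℝ) (ζ μ : ℝ) (ψ₁ ψ₂ : ℝ → ℂ) : Prop :=
  (∀ x, DifferentiableAt ℝ ψ₁ x) ∧ (∀ x, DifferentiableAt ℝ ψ₂ x) ∧
  (∀ x : ℝ,
    -Complex.I * deriv ψ₂ x - Complex.I * ((ζ : ℂ) - (A₂ x : ℂ)) * ψ₂ x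
      + ((V x : ℂ) + (m x : ℂ)) * ψ₁ x = (μ : ℂ) * ψ₁ x) ∧
  (∀ x : ℝ,
    -Complex.I * deriv ψ₁ x + Complex.I * ((ζ : ℂ) - (A₂ x : ℂ)) * ψ₁ x
      + ((V x : ℂ) - (m x : ℂ)) * ψ₂ x = (μ : ℂ) * ψ₂ x)

/-- Two solutions of the Dirac eigenvalue system with the same eigenvalue that decay at
`+∞` have identically vanishing Wronskian; in particular they are pointwise linearly
dependent. -/
theorem wronskian_vanishes_of_decay (A₂ m V : ℝ → ℝ) (ζ μ : ℝ)
    (ψ₁ ψ₂ φ₁ φ₂ : ℝ → ℂ)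
    (hψ : SolvesDirac A₂ m V ζ μ ψ₁ ψ₂) (hφ : SolvesDirac A₂ m V ζ μ φ₁ φ₂)
    (hψ₁ : Filter.Tendsto ψ₁ Filter.atTop (nhds 0))
    (hψ₂ : Filter.Tendsto ψ₂ Filter.atTop (nhds 0))
    (hφ₁ : Filter.Tendsto φ₁ Filter.atTop (nhds 0))
    (hφ₂ : Filter.Tendsto φ₂ Filter.atTop (nhds 0)) :
    (∀ x : ℝ, ψ₁ x * φ₂ x - ψ₂ x * φ₁ x = 0) ∧
      ∀ x : ℝ, ∃ a b : ℂ, (a ≠ 0 ∨ b ≠ 0) ∧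
        a * ψ₁ x + b * φ₁ x = 0 ∧ a * ψ₂ x + b * φ₂ x = 0 := by
  obtain ⟨d1, d2, e1, e2⟩ := hψ
  obtain ⟨f1, f2, g1, g2⟩ := hφ
  have hI : Complex.I * Complex.I = -1 := Complex.I_mul_I
  have hd : ∀ x, HasDerivAt (fun x => ψ₁ x * φ₂ x - ψ₂ x * φ₁ x) 0 x := by
    intro x
    have h := ((d1 x).hasDerivAt.mul (f2 x).hasDerivAt).sub
      ((d2 x).hasDerivAt.mul (f1 x).hasDerivAt)
    refine h.congr_deriv ?_
    have a1 := e1 x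
    have a2 := e2 x
    have b1 := g1 x
    have b2 := g2 x
    apply mul_left_cancel₀ Complex.I_ne_zero
    linear_combination (-φ₂ x) * a2 - ψ₁ x * b1 + φ₁ x * a1 + ψ₂ x * b2
  have hW : ∀ x : ℝ, ψ₁ x * φ₂ x - ψ₂ x * φ₁ x = 0 := by
    intro x
    have hc : ∀ y, ψ₁ y * φ₂ y - ψ₂ y * φ₁ y = ψ₁ x * φ₂ x - ψ₂ x * φ₁ x := fun y =>
      is_const_of_deriv_eq_zero (fun z => (hd z).differentiableAt) (fun z => (hd z).deriv) y x
    have ht := (hψ₁.mul hφ₂).sub (hψ₂.mul hφ₁)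
    simp only [hc, mul_zero, sub_zero] at ht
    exact tendsto_nhds_unique tendsto_const_nhds ht
  refine ⟨hW, fun x => ?_⟩
  have h := hW x
  by_cases h1 : φ₁ x = 0
  · by_cases h2 : φ₂ x = 0
    · exact ⟨0, 1, Or.inr one_ne_zero, by simp [h1], by simp [h2]⟩
    · exact ⟨φ₂ x, -ψ₂ x, Or.inl h2, by linear_combination h, by ring⟩
  · exact ⟨φ₁ x, -ψ₁ x, Or.inl h1, by ring, by linear_combination -h⟩
end

section
/- Let A₂, m, V : ℝ → ℝ be smooth functions, ζ, μ ∈ ℝ, and suppose the pairs (ψ₁, ψ₂) and (φ₁, φ₂) of continuously differentiable functions ℝ → ℂ both solve the Dirac eigenvalue system with data A₂, m, V, ζ and the same eigenvalue μ. If ψ₁, ψ₂, φ₁, φ₂ all tend to 0 as x → +∞, then the two solutions are linearly dependent as functions: there exist complex numbers a, b, not both zero, such that a·ψ₁ + b·φ₁ ≡ 0 and a·ψ₂ + b·φ₂ ≡ 0 on ℝ. (This expresses the simplicity of every eigenvalue of the fibered operator Ĥ(ζ).) -/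
theorem dirac_unique_zero (w p q : ℝ → ℝ) (hw : Continuous w) (hp : Continuous p)
    (hq : Continuous q) (u₁ u₂ : ℝ → ℂ)
    (h₁ : ∀ x, HasDerivAt u₁ ((w x : ℂ) * u₁ x - Complex.I * (p x : ℂ) * u₂ x) x)
    (h₂ : ∀ x, HasDerivAt u₂ (-(w x : ℂ) * u₂ x - Complex.I * (q x : ℂ) * u₁ x) x)
    (h01 : u₁ 0 = 0) (h02 : u₂ 0 = 0) (x : ℝ) : u₁ x = 0 ∧ u₂ x = 0 := by
  obtain ⟨C, hC⟩ := (isCompact_Icc (a := -(|x| + 1)) (b := |x| + 1)).exists_bound_of_continuousOn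
    (f := fun t => |w t| + |p t| + |q t|) (by fun_prop)
  have hx0 := abs_nonneg x
  have hC0 : 0 ≤ C := (norm_nonneg _).trans (hC 0 ⟨by linarith, by linarith⟩)
  let v : ℝ → ℂ × ℂ → ℂ × ℂ := fun t z =>
    ((w t : ℂ) * z.1 - Complex.I * (p t : ℂ) * z.2, -(w t : ℂ) * z.2 - Complex.I * (q t : ℂ) * z.1)
  have hv : ∀ t ∈ Set.Ioo (-(|x| + 1)) (|x| + 1),
      LipschitzOnWith ⟨C, hC0⟩ (v t) Set.univ := by
    intro t ht
    apply LipschitzWith.lipschitzOnWith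
    apply LipschitzWith.of_dist_le_mul
    intro y z
    have hb := hC t ⟨ht.1.le, ht.2.le⟩
    rw [Real.norm_eq_abs, abs_of_nonneg (by positivity)] at hb
    rw [dist_eq_norm, dist_eq_norm]
    have e : v t y - v t z = v t (y - z) := by
      simp only [v]
      ext1 <;> simp <;> ring
    rw [e]
    generalize y - z = d
    have d1 : ‖d.1‖ ≤ ‖d‖ := norm_fst_le d
    have d2 : ‖d.2‖ ≤ ‖d‖ := norm_snd_le d
    have hd := norm_nonneg d
    have aw := abs_nonneg (w t)
    have ap := abs_nonneg (p t)
    have aq := abs_nonneg (q t)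
    change ‖v t d‖ ≤ C * ‖d‖
    refine norm_prod_le_iff.2 ⟨?_, ?_⟩
    · refine (norm_sub_le _ _).trans ?_
      simp only [norm_mul, norm_neg, Complex.norm_I, Complex.norm_real, Real.norm_eq_abs, one_mul]
      nlinarith [mul_le_mul_of_nonneg_left d1 aw, mul_le_mul_of_nonneg_left d2 ap,
        mul_le_mul_of_nonneg_right hb hd, mul_nonneg aq hd]
    · refine (norm_sub_le _ _).trans ?_
      simp only [norm_mul, norm_neg, Complex.norm_I, Complex.norm_real, Real.norm_eq_abs, one_mul]
      nlinarith [mul_le_mul_of_nonneg_left d2 aw, mul_le_mul_of_nonneg_left d1 aq,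
        mul_le_mul_of_nonneg_right hb hd, mul_nonneg ap hd]
  have key := ODE_solution_unique_of_mem_Ioo (t₀ := 0) (f := fun t => (u₁ t, u₂ t))
    (g := fun _ => (0 : ℂ × ℂ)) hv
    ⟨by linarith, by linarith⟩ (fun t _ => ⟨(h₁ t).prodMk (h₂ t), trivial⟩)
    (fun t _ => ⟨(hasDerivAt_const t (0 : ℂ × ℂ)).congr_deriv (by ext1 <;> simp [v]), trivial⟩)
    (by simp [h01, h02])
  have := key (x := x) ⟨by linarith [neg_abs_le x], by linarith [le_abs_self x]⟩
  simpa using this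

theorem dirac_hasDeriv {A₂ m V : ℝ → ℝ} {ζ μ : ℝ} {ψ₁ ψ₂ : ℝ → ℂ}
    (h : SolvesDirac A₂ m V ζ μ ψ₁ ψ₂) :
    (∀ x, HasDerivAt ψ₁ (((ζ - A₂ x : ℝ) : ℂ) * ψ₁ x
      - Complex.I * ((V x - m x - μ : ℝ) : ℂ) * ψ₂ x) x) ∧
    (∀ x, HasDerivAt ψ₂ (-((ζ - A₂ x : ℝ) : ℂ) * ψ₂ x
      - Complex.I * ((V x + m x - μ : ℝ) : ℂ) * ψ₁ x) x) := by
  obtain ⟨d1, d2, e1, e2⟩ := h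
  constructor
  · intro x
    refine HasDerivAt.congr_deriv ((d1 x).hasDerivAt) ?_
    push_cast
    linear_combination Complex.I * e2 x
      + (deriv ψ₁ x - ((ζ : ℂ) - A₂ x) * ψ₁ x) * Complex.I_sq
  · intro x
    refine HasDerivAt.congr_deriv ((d2 x).hasDerivAt) ?_
    push_cast
    linear_combination Complex.I * e1 x
      + (deriv ψ₂ x + ((ζ : ℂ) - A₂ x) * ψ₂ x) * Complex.I_sq

/-- Simplicity of eigenvalues of the fibered operator `Ĥ(ζ)`: two decaying `C¹` solutions
of the Dirac eigenvalue system with the same eigenvalue are globally linearly dependent. -/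
theorem eigenvalue_simple (A₂ m V : ℝ → ℝ)
    (hA₂ : ContDiff ℝ (⊤ : ℕ∞) A₂) (hm : ContDiff ℝ (⊤ : ℕ∞) m) (hV : ContDiff ℝ (⊤ : ℕ∞) V)
    (ζ μ : ℝ) (ψ₁ ψ₂ φ₁ φ₂ : ℝ → ℂ)
    (hψ₁C : ContDiff ℝ 1 ψ₁) (hψ₂C : ContDiff ℝ 1 ψ₂)
    (hφ₁C : ContDiff ℝ 1 φ₁) (hφ₂C : ContDiff ℝ 1 φ₂)
    (hψ : SolvesDirac A₂ m V ζ μ ψ₁ ψ₂) (hφ : SolvesDirac A₂ m V ζ μ φ₁ φ₂)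
    (hψ₁ : Filter.Tendsto ψ₁ Filter.atTop (nhds 0))
    (hψ₂ : Filter.Tendsto ψ₂ Filter.atTop (nhds 0))
    (hφ₁ : Filter.Tendsto φ₁ Filter.atTop (nhds 0))
    (hφ₂ : Filter.Tendsto φ₂ Filter.atTop (nhds 0)) :
    ∃ a b : ℂ, (a ≠ 0 ∨ b ≠ 0) ∧
      (∀ x : ℝ, a * ψ₁ x + b * φ₁ x = 0) ∧ (∀ x : ℝ, a * ψ₂ x + b * φ₂ x = 0) := by
  obtain ⟨p1, p2⟩ := dirac_hasDeriv hψ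
  obtain ⟨f1, f2⟩ := dirac_hasDeriv hφ
  have hW : ∀ x, HasDerivAt (fun x => ψ₁ x * φ₂ x - ψ₂ x * φ₁ x) 0 x := by
    intro x
    refine HasDerivAt.congr_deriv (((p1 x).mul (f2 x)).sub ((p2 x).mul (f1 x))) ?_
    ring
  have hc : ∀ x, ψ₁ x * φ₂ x - ψ₂ x * φ₁ x = ψ₁ 0 * φ₂ 0 - ψ₂ 0 * φ₁ 0 := fun x =>
    is_const_of_deriv_eq_zero (fun x => (hW x).differentiableAt) (fun x => (hW x).deriv) x 0
  have hlim : Filter.Tendsto (fun x => ψ₁ x * φ₂ x - ψ₂ x * φ₁ x) Filter.atTop (nhds 0) := by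
    simpa using (hψ₁.mul hφ₂).sub (hψ₂.mul hφ₁)
  have hW0 : ψ₁ 0 * φ₂ 0 - ψ₂ 0 * φ₁ 0 = 0 := by
    simp only [hc] at hlim
    exact tendsto_nhds_unique tendsto_const_nhds hlim
  have hab : ∃ a b : ℂ, (a ≠ 0 ∨ b ≠ 0) ∧ a * ψ₁ 0 + b * φ₁ 0 = 0 ∧ a * ψ₂ 0 + b * φ₂ 0 = 0 := by
    by_cases h1 : ψ₁ 0 = 0
    · by_cases h2 : ψ₂ 0 = 0
      · exact ⟨1, 0, by simp, by simp [h1], by simp [h2]⟩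
      · exact ⟨φ₂ 0, -ψ₂ 0, by simp [h2], by linear_combination hW0, by ring⟩
    · exact ⟨φ₁ 0, -ψ₁ 0, by simp [h1], by ring, by linear_combination -hW0⟩
  obtain ⟨a, b, hne, h1, h2⟩ := hab
  have cA := hA₂.continuous
  have cm := hm.continuous
  have cV := hV.continuous
  have key := dirac_unique_zero (fun x => ζ - A₂ x) (fun x => V x - m x - μ)
    (fun x => V x + m x - μ) (by fun_prop) (by fun_prop) (by fun_prop)
    (fun x => a * ψ₁ x + b * φ₁ x) (fun x => a * ψ₂ x + b * φ₂ x)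
    (fun x => by
      refine HasDerivAt.congr_deriv (((p1 x).const_mul a).add ((f1 x).const_mul b)) ?_
      ring)
    (fun x => by
      refine HasDerivAt.congr_deriv (((p2 x).const_mul a).add ((f2 x).const_mul b)) ?_
      ring) h1 h2
  exact ⟨a, b, hne, fun x => (key x).1, fun x => (key x).2⟩
end

section
/- Let A₂ : ℝ → ℝ be smooth with bounded derivative, and let m₀ ∈ ℝ satisfy m₀² > sup_{x ∈ ℝ} |A₂′(x)|. Then for every ζ ∈ ℝ and every pair of smooth compactly supported functions ψ₁, ψ₂ : ℝ → ℂ, with u = −i·ψ₂′ − i·(ζ − A₂)·ψ₂ + m₀·ψ₁ and v = −i·ψ₁′ + i·(ζ − A₂)·ψ₁ − m₀·ψ₂, one has ∫_ℝ (|u(x)|² + |v(x)|²) dx ≥ (m₀² − sup_{x ∈ ℝ} |A₂′(x)|) · ∫_ℝ (|ψ₁(x)|² + |ψ₂(x)|²) dx. (This expresses that the operator Ĥ₀(ζ) = D_x σ₁ + (ζ − A₂(x)) σ₂ + m₀ σ₃ has a spectral gap in the interval (−Δ, Δ) with Δ = √(m₀² − ‖A₂′‖_∞).) -/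
open MeasureTheory

/-- Spectral gap for `Ĥ₀(ζ) = D_x σ₁ + (ζ − A₂(x)) σ₂ + m₀ σ₃` when
`m₀² > ‖A₂′‖_∞`: the quadratic form of `Ĥ₀²(ζ)` is bounded below by
`m₀² − ‖A₂′‖_∞` on smooth compactly supported spinors. -/
theorem dirac_spectral_gap (A₂ : ℝ → ℝ) (hA₂ : ContDiff ℝ (⊤ : ℕ∞) A₂)
    (hbdd : BddAbove (Set.range fun x => |deriv A₂ x|))
    (m₀ : ℝ) (hm₀ : (⨆ x : ℝ, |deriv A₂ x|) < m₀ ^ 2) :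
    ∀ ζ : ℝ, ∀ ψ₁ ψ₂ : ℝ → ℂ, ContDiff ℝ (⊤ : ℕ∞) ψ₁ → ContDiff ℝ (⊤ : ℕ∞) ψ₂ →
      HasCompactSupport ψ₁ → HasCompactSupport ψ₂ →
      ∀ u v : ℝ → ℂ,
        (∀ x, u x = -Complex.I * deriv ψ₂ x
          - Complex.I * ((ζ : ℂ) - (A₂ x : ℂ)) * ψ₂ x + (m₀ : ℂ) * ψ₁ x) →
        (∀ x, v x = -Complex.I * deriv ψ₁ x
          + Complex.I * ((ζ : ℂ) - (A₂ x : ℂ)) * ψ₁ x - (m₀ : ℂ) * ψ₂ x) →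
        (m₀ ^ 2 - ⨆ x : ℝ, |deriv A₂ x|) * ∫ x : ℝ, (‖ψ₁ x‖ ^ 2 + ‖ψ₂ x‖ ^ 2) ≤
          ∫ x : ℝ, (‖u x‖ ^ 2 + ‖v x‖ ^ 2) := by
  intro ζ ψ₁ ψ₂ h1 h2 c1 c2 u v hu hv
  set S := ⨆ x : ℝ, |deriv A₂ x| with hS
  have hSx : ∀ x, |deriv A₂ x| ≤ S := fun x => le_ciSup hbdd x
  have dA : ∀ x, HasDerivAt A₂ (deriv A₂ x) x := fun x =>
    ((hA₂.differentiable (by simp)) x).hasDerivAt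
  have d1 : ∀ x, HasDerivAt ψ₁ (deriv ψ₁ x) x := fun x =>
    ((h1.differentiable (by simp)) x).hasDerivAt
  have d2 : ∀ x, HasDerivAt ψ₂ (deriv ψ₂ x) x := fun x =>
    ((h2.differentiable (by simp)) x).hasDerivAt
  have hre : ∀ (f : ℝ → ℂ) (f' : ℂ) (x : ℝ), HasDerivAt f f' x →
      HasDerivAt (fun y => (f y).re) f'.re x := fun f f' x h =>
    Complex.reCLM.hasFDerivAt.comp_hasDerivAt x h
  have him : ∀ (f : ℝ → ℂ) (f' : ℂ) (x : ℝ), HasDerivAt f f' x →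
      HasDerivAt (fun y => (f y).im) f'.im x := fun f f' x h =>
    Complex.imCLM.hasFDerivAt.comp_hasDerivAt x h
  have cA : Continuous A₂ := hA₂.continuous
  have cdA : Continuous (deriv A₂) := hA₂.continuous_deriv (by simp)
  have k1 : Continuous ψ₁ := h1.continuous
  have k2 : Continuous ψ₂ := h2.continuous
  have kd1 : Continuous (deriv ψ₁) := h1.continuous_deriv (by simp)
  have kd2 : Continuous (deriv ψ₂) := h2.continuous_deriv (by simp)
  let K : Set ℝ := tsupport ψ₁ ∪ tsupport ψ₂
  have hK : IsCompact K := c1.isCompact.union c2.isCompact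
  have z1 : ∀ x, x ∉ K → ψ₁ x = 0 := fun x hx =>
    image_eq_zero_of_notMem_tsupport fun h => hx (Or.inl h)
  have z2 : ∀ x, x ∉ K → ψ₂ x = 0 := fun x hx =>
    image_eq_zero_of_notMem_tsupport fun h => hx (Or.inr h)
  have zd1 : ∀ x, x ∉ K → deriv ψ₁ x = 0 := fun x hx => by
    by_contra h
    exact hx (Or.inl (support_deriv_subset h))
  have zd2 : ∀ x, x ∉ K → deriv ψ₂ x = 0 := fun x hx => by
    by_contra h
    exact hx (Or.inr (support_deriv_subset h))
  have hint : ∀ g : ℝ → ℝ, Continuous g → (∀ x, x ∉ K → g x = 0) → Integrable g :=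
    fun g hg hz => hg.integrable_of_hasCompactSupport (HasCompactSupport.intro hK hz)
  let F : ℝ → ℝ := fun x => (ζ - A₂ x) * ((ψ₂ x).re * (ψ₂ x).re + (ψ₂ x).im * (ψ₂ x).im
      - ((ψ₁ x).re * (ψ₁ x).re + (ψ₁ x).im * (ψ₁ x).im))
      + 2 * m₀ * ((ψ₂ x).im * (ψ₁ x).re - (ψ₂ x).re * (ψ₁ x).im)
  let G : ℝ → ℝ := fun x => (- deriv A₂ x) * ((ψ₂ x).re * (ψ₂ x).re + (ψ₂ x).im * (ψ₂ x).im
      - ((ψ₁ x).re * (ψ₁ x).re + (ψ₁ x).im * (ψ₁ x).im))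
      + (ζ - A₂ x) * (((deriv ψ₂ x).re * (ψ₂ x).re + (ψ₂ x).re * (deriv ψ₂ x).re)
        + ((deriv ψ₂ x).im * (ψ₂ x).im + (ψ₂ x).im * (deriv ψ₂ x).im)
      - (((deriv ψ₁ x).re * (ψ₁ x).re + (ψ₁ x).re * (deriv ψ₁ x).re)
        + ((deriv ψ₁ x).im * (ψ₁ x).im + (ψ₁ x).im * (deriv ψ₁ x).im)))
      + 2 * m₀ * (((deriv ψ₂ x).im * (ψ₁ x).re + (ψ₂ x).im * (deriv ψ₁ x).re)
        - ((deriv ψ₂ x).re * (ψ₁ x).im + (ψ₂ x).re * (deriv ψ₁ x).im))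
  have hF : ∀ x, HasDerivAt F (G x) x := fun x => by
    have r1 := hre _ _ x (d1 x)
    have r2 := hre _ _ x (d2 x)
    have i1 := him _ _ x (d1 x)
    have i2 := him _ _ x (d2 x)
    exact (((dA x).const_sub ζ).mul (((r2.mul r2).add (i2.mul i2)).sub
      ((r1.mul r1).add (i1.mul i1)))).add (((i2.mul r1).sub (r2.mul i1)).const_mul (2 * m₀))
  have iF : Integrable F := hint F (by fun_prop) fun x hx => by simp [F, z1 x hx, z2 x hx]
  have iG : Integrable G := hint G (by fun_prop) fun x hx => by
    simp [G, z1 x hx, z2 x hx]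
  have hG0 : ∫ x, G x = 0 := integral_eq_zero_of_hasDerivAt_of_integrable hF iG iF
  have ku : Continuous u := by
    rw [funext hu]; fun_prop
  have kv : Continuous v := by
    rw [funext hv]; fun_prop
  have iU : Integrable (fun x => ‖u x‖ ^ 2 + ‖v x‖ ^ 2) := hint _ (by fun_prop) fun x hx => by
    simp [hu, hv, z1 x hx, z2 x hx, zd1 x hx, zd2 x hx]
  have iP : Integrable (fun x => ‖ψ₁ x‖ ^ 2 + ‖ψ₂ x‖ ^ 2) := hint _ (by fun_prop) fun x hx => by
    simp [z1 x hx, z2 x hx]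
  have key : ∀ x, (m₀ ^ 2 - S) * (‖ψ₁ x‖ ^ 2 + ‖ψ₂ x‖ ^ 2) ≤
      (‖u x‖ ^ 2 + ‖v x‖ ^ 2) - G x := fun x => by
    obtain ⟨l, r⟩ := abs_le.mp (hSx x)
    simp only [Complex.sq_norm, Complex.normSq_apply, hu, hv, G]
    simp only [Complex.add_re, Complex.sub_re, Complex.mul_re, Complex.neg_re, Complex.I_re,
      Complex.I_im, Complex.neg_im, Complex.add_im, Complex.sub_im, Complex.mul_im,
      Complex.ofReal_re, Complex.ofReal_im]
    generalize (ψ₁ x).re = a, (ψ₁ x).im = b, (ψ₂ x).re = c, (ψ₂ x).im = d,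
      (deriv ψ₁ x).re = a', (deriv ψ₁ x).im = b', (deriv ψ₂ x).re = c',
      (deriv ψ₂ x).im = d', deriv A₂ x = t at *
    generalize A₂ x = s
    have e1 : 0 ≤ (S - t) * (a * a + b * b) := mul_nonneg (by linarith) (by nlinarith)
    have e2 : 0 ≤ (S + t) * (c * c + d * d) := mul_nonneg (by linarith) (by nlinarith)
    have q1 := mul_self_nonneg a'
    have q2 := mul_self_nonneg b'
    have q3 := mul_self_nonneg c'
    have q4 := mul_self_nonneg d'
    have q5 := mul_self_nonneg ((ζ - s) * a)
    have q6 := mul_self_nonneg ((ζ - s) * b)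
    have q7 := mul_self_nonneg ((ζ - s) * c)
    have q8 := mul_self_nonneg ((ζ - s) * d)
    nlinarith only [e1, e2, q1, q2, q3, q4, q5, q6, q7, q8]
  calc _ = ∫ x, (m₀ ^ 2 - S) * (‖ψ₁ x‖ ^ 2 + ‖ψ₂ x‖ ^ 2) := (integral_const_mul _ _).symm
    _ ≤ ∫ x, ((‖u x‖ ^ 2 + ‖v x‖ ^ 2) - G x) := integral_mono (iP.const_mul _) (iU.sub iG) key
    _ = _ := by rw [integral_sub iU iG, hG0, sub_zero]
end

section
/- Let B > 0, ζ ∈ ℝ, m, V ∈ ℝ, k ≥ 1 an integer, and ε ∈ {−1, +1}. Define φ_j(x) = He_j(√(2B)·(x − ζ/B)) · exp(−B·(x − ζ/B)²/2) for j ∈ ℕ, where He_j is the j-th probabilists' Hermite polynomial. Then there exist complex numbers c₁, c₂, not both zero, such that the pair (ψ₁, ψ₂) with ψ₁(x) = c₁·φ_k(x) and ψ₂(x) = c₂·φ_{k−1}(x) solves the Dirac eigenvalue system with data A₂(x) = B·x, constant mass m, constant potential V, momentum ζ, and eigenvalue μ = ε·√(2kB + m²) + V. -/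
/-- The `j`-th probabilists' Hermite polynomial, evaluated over `ℝ`. -/
noncomputable def He (j : ℕ) (t : ℝ) : ℝ := Polynomial.aeval t (Polynomial.hermite j)

/-- The `j`-th Hermite (Landau) function with magnetic field `B` and momentum `ζ`. -/
noncomputable def landauFun (B ζ : ℝ) (j : ℕ) (x : ℝ) : ℝ :=
  He j (Real.sqrt (2 * B) * (x - ζ / B)) * Real.exp (-(B * (x - ζ / B) ^ 2 / 2))

open Polynomial in
theorem aux_hermite_deriv (n : ℕ) :
    derivative (hermite (n + 1)) = ((n : ℤ[X]) + 1) * hermite n := by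
  induction n with
  | zero => simp
  | succ n ih =>
    rw [hermite_succ (n + 1), derivative_sub, derivative_mul, derivative_X, ih]
    have h := hermite_succ n
    have h2 : derivative (((n : ℤ[X]) + 1) * hermite n)
        = ((n : ℤ[X]) + 1) * derivative (hermite n) := by
      rw [derivative_mul]; simp
    rw [h2]
    push_cast
    linear_combination (-((n : ℤ[X]) + 1)) * h

theorem aux_landau_deriv (B ζ : ℝ) (j : ℕ) (x : ℝ) :
    HasDerivAt (landauFun B ζ j)
      ((Real.sqrt (2 * B) * Polynomial.aeval (Real.sqrt (2 * B) * (x - ζ / B))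
          (Polynomial.derivative (Polynomial.hermite j))
        - B * (x - ζ / B) * He j (Real.sqrt (2 * B) * (x - ζ / B)))
        * Real.exp (-(B * (x - ζ / B) ^ 2 / 2))) x := by
  have hu : HasDerivAt (fun x : ℝ => x - ζ / B) 1 x := (hasDerivAt_id x).sub_const _
  have ht := hu.const_mul (Real.sqrt (2 * B))
  have hp := ((Polynomial.hermite j).hasDerivAt_aeval (Real.sqrt (2 * B) * (x - ζ / B))).comp x ht
  have he := ((((hu.pow 2).const_mul B).div_const 2).neg).exp
  have := hp.mul he
  refine HasDerivAt.congr_deriv this ?_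
  simp [He]
  ring

/-- For `B > 0`, `k ≥ 1` and `ε = ±1`, some nontrivial combination
`(c₁ φ_k, c₂ φ_{k−1})` is an eigenfunction of the bulk magnetic Dirac operator with
eigenvalue `ε√(2kB + m²) + V`. -/
theorem landau_pair_eigenfunction (B ζ m V : ℝ) (hB : 0 < B) (k : ℕ) (hk : 1 ≤ k)
    (ε : ℝ) (hε : ε = -1 ∨ ε = 1) :
    ∃ c₁ c₂ : ℂ, (c₁ ≠ 0 ∨ c₂ ≠ 0) ∧
      SolvesDirac (fun x => B * x) (fun _ => m) (fun _ => V) ζ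
        (ε * Real.sqrt (2 * k * B + m ^ 2) + V)
        (fun x => c₁ * (landauFun B ζ k x : ℂ))
        (fun x => c₂ * (landauFun B ζ (k - 1) x : ℂ)) := by
  obtain ⟨n, rfl⟩ : ∃ n, k = n + 1 := ⟨k - 1, by omega⟩
  simp only [Nat.add_sub_cancel]
  have hs2 : Real.sqrt (2 * B) ^ 2 = 2 * B := Real.sq_sqrt (by positivity)
  have hspos : 0 < Real.sqrt (2 * B) := Real.sqrt_pos.2 (by positivity)
  have hE : (ε * Real.sqrt (2 * ((n + 1 : ℕ) : ℝ) * B + m ^ 2)) ^ 2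
      = 2 * ((n + 1 : ℕ) : ℝ) * B + m ^ 2 := by
    rw [mul_pow, Real.sq_sqrt (by positivity)]
    rcases hε with rfl | rfl <;> ring
  generalize ε * Real.sqrt (2 * ((n + 1 : ℕ) : ℝ) * B + m ^ 2) = E at hE ⊢
  have hd := fun j x => (aux_landau_deriv B ζ j x).ofReal_comp
  refine ⟨Complex.I * (Real.sqrt (2 * B) : ℝ), ((E - m : ℝ) : ℂ), Or.inl ?_, ?_, ?_, ?_, ?_⟩
  · exact mul_ne_zero Complex.I_ne_zero (Complex.ofReal_ne_zero.2 hspos.ne')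
  · exact fun x => ((hd (n + 1) x).const_mul _).differentiableAt
  · exact fun x => ((hd n x).const_mul _).differentiableAt
  · intro x
    rw [((hd n x).const_mul _).deriv]
    have hz : ζ - B * x = -(B * (x - ζ / B)) := by field_simp; ring
    have hz' : (ζ : ℂ) - ((B * x : ℝ) : ℂ) = ((-(B * (x - ζ / B)) : ℝ) : ℂ) := by
      rw [← hz]; push_cast; ring
    rw [hz']
    simp only [landauFun, He, Polynomial.hermite_succ, map_sub, map_mul, Polynomial.aeval_X]
    generalize x - ζ / B = u
    generalize Real.exp _ = e
    generalize Polynomial.aeval (Real.sqrt (2 * B) * u) (Polynomial.derivative (Polynomial.hermite n)) = q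
    generalize Polynomial.aeval (Real.sqrt (2 * B) * u) (Polynomial.hermite n) = p
    generalize Real.sqrt (2 * B) = s at *
    have hs2' : (s : ℂ) ^ 2 = 2 * B := by exact_mod_cast hs2
    push_cast
    linear_combination (-Complex.I * (E - m) * u * p * e) * hs2'
  · intro x
    rw [((hd (n + 1) x).const_mul _).deriv]
    have hz : ζ - B * x = -(B * (x - ζ / B)) := by field_simp; ring
    have hz' : (ζ : ℂ) - ((B * x : ℝ) : ℂ) = ((-(B * (x - ζ / B)) : ℝ) : ℂ) := by
      rw [← hz]; push_cast; ring
    rw [hz', aux_hermite_deriv]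
    simp only [landauFun, He, map_mul, map_add, map_natCast, map_one]
    generalize x - ζ / B = u
    generalize Real.exp _ = e
    generalize Polynomial.aeval (Real.sqrt (2 * B) * u) (Polynomial.hermite (n + 1)) = q
    generalize Polynomial.aeval (Real.sqrt (2 * B) * u) (Polynomial.hermite n) = p
    generalize Real.sqrt (2 * B) = s at *
    have hs2' : (s : ℂ) ^ 2 = 2 * B := by exact_mod_cast hs2
    have hE' : (E : ℂ) ^ 2 = 2 * (n + 1) * B + m ^ 2 := by exact_mod_cast hE
    push_cast
    linear_combination (-(s : ℂ) ^ 2 * (n + 1) * p * e) * Complex.I_sq + ((n + 1) * p * e : ℂ) * hs2' - (p * e : ℂ) * hE'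
end

section
/- Let B₋ < 0 < B₊ and B ∈ 𝔖(B₋, B₊) with A₂(x) = x·B(x), and let m ∈ 𝔖(m₋, m₊) and V ∈ 𝔖(V₋, V₊) for some real numbers m₋, m₊, V₋, V₊. Then for every M > 0 there exists ζ₀ ∈ ℝ such that for every ζ ≤ ζ₀ and every pair of smooth compactly supported functions ψ₁, ψ₂ : ℝ → ℂ, with u = −i·ψ₂′ − i·(ζ − A₂)·ψ₂ + (V + m)·ψ₁ and v = −i·ψ₁′ + i·(ζ − A₂)·ψ₁ + (V − m)·ψ₂, one has ∫_ℝ (|u(x)|² + |v(x)|²) dx ≥ M · ∫_ℝ (|ψ₁(x)|² + |ψ₂(x)|²) dx. (This expresses that all eigenvalues of the fibered operator Ĥ(ζ) tend to infinity in absolute value uniformly as ζ → −∞.) -/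
open MeasureTheory

lemma bdd_of_switch_like (f : ℝ → ℝ) (c d α β : ℝ) (hf : Continuous f)
    (h1 : ∀ x < α, f x = c) (h2 : ∀ x, β < x → f x = d) : ∃ K : ℝ, 0 ≤ K ∧ ∀ x, |f x| ≤ K := by
  obtain ⟨C, hC⟩ := (isCompact_Icc (a := α) (b := β)).exists_bound_of_continuousOn hf.continuousOn
  refine ⟨max (max |c| |d|) C, le_trans (abs_nonneg c) (by simp), fun x => ?_⟩
  rcases lt_or_ge x α with h | h
  · rw [h1 x h]; simp
  rcases lt_or_ge β x with h' | h'
  · rw [h2 x h']; simp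
  · exact le_trans (hC x ⟨h, h'⟩) (le_max_right _ _)

lemma switch_bdd {c d : ℝ} {f : ℝ → ℝ} (h : IsSwitch c d f) : ∃ K : ℝ, 0 ≤ K ∧ ∀ x, |f x| ≤ K := by
  obtain ⟨hs, α, β, -, h1, h2⟩ := h
  exact bdd_of_switch_like f c d α β hs.continuous (fun x hx => h1 x hx.le) (fun x hx => h2 x hx.le)

lemma A_lower {Bm Bp : ℝ} {B : ℝ → ℝ} (hBm : Bm < 0) (hBp : 0 < Bp) (hB : IsSwitch Bm Bp B) :
    ∃ C : ℝ, ∀ x, -C ≤ x * B x := by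
  obtain ⟨hs, α, β, -, h1, h2⟩ := hB
  have hc : Continuous fun x => x * B x := continuous_id.mul hs.continuous
  obtain ⟨C, hC⟩ := (isCompact_Icc (a := α) (b := β)).exists_bound_of_continuousOn hc.continuousOn
  refine ⟨max (max |α * Bm| |β * Bp|) C, fun x => ?_⟩
  have e1 : |α * Bm| ≤ max (max |α * Bm| |β * Bp|) C := by simp
  have e2 : |β * Bp| ≤ max (max |α * Bm| |β * Bp|) C := by simp
  have e3 : C ≤ max (max |α * Bm| |β * Bp|) C := by simp
  rcases le_or_gt x α with h | h
  · rw [h1 x h]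
    have := neg_abs_le (α * Bm)
    nlinarith
  rcases le_or_gt β x with h' | h'
  · rw [h2 x h']
    have := neg_abs_le (β * Bp)
    nlinarith
  · have := hC x ⟨h.le, h'.le⟩
    rw [Real.norm_eq_abs] at this
    have := neg_abs_le (x * B x)
    linarith

lemma A_deriv {Bm Bp : ℝ} {B : ℝ → ℝ} (hB : IsSwitch Bm Bp B) :
    ∃ L : ℝ, 0 ≤ L ∧ ∀ x, |deriv (fun x => x * B x) x| ≤ L := by
  have hsw := hB
  obtain ⟨hs, α, β, -, h1, h2⟩ := hB
  have hc : ContDiff ℝ (⊤ : ℕ∞) fun x => x * B x := contDiff_id.mul hs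
  refine bdd_of_switch_like _ Bm Bp α β (hc.continuous_deriv (by simp)) ?_ ?_
  · intro x hx
    have : (fun x => x * B x) =ᶠ[nhds x] fun x => x * Bm := by
      filter_upwards [Iio_mem_nhds hx] with y hy
      rw [h1 y (le_of_lt hy)]
    rw [this.deriv_eq]; simp
  · intro x hx
    have : (fun x => x * B x) =ᶠ[nhds x] fun x => x * Bp := by
      filter_upwards [Ioi_mem_nhds hx] with y hy
      rw [h2 y (le_of_lt hy)]
    rw [this.deriv_eq]; simp

/-- pointwise: half of the square minus the perturbation -/
lemma pt_bound (p dp q : ℂ) (w b K : ℝ) (hb : |b| ≤ K) (z : ℂ)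
    (hz : z = -Complex.I * dp - Complex.I * (w : ℂ) * p + (b : ℂ) * q) :
    1 / 2 * (w ^ 2 * ‖p‖ ^ 2) + w * inner ℝ p dp - K ^ 2 * ‖q‖ ^ 2 ≤ ‖z‖ ^ 2 := by
  have hb2 : b ^ 2 ≤ K ^ 2 := sq_le_sq' (by linarith [neg_abs_le b]) (by linarith [le_abs_self b])
  subst hz
  rw [Complex.inner]
  simp only [← Complex.normSq_eq_norm_sq, Complex.normSq_apply]
  simp
  nlinarith [mul_le_mul_of_nonneg_right hb2 (add_nonneg (mul_self_nonneg q.re) (mul_self_nonneg q.im)),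
    sq_nonneg (dp.im + w * p.im + 2 * b * q.re), sq_nonneg (dp.re + w * p.re - 2 * b * q.im),
    sq_nonneg dp.re, sq_nonneg dp.im]

/-- When `B₋ < 0 < B₊`, all eigenvalues of the fibered operator `Ĥ(ζ)` tend to infinity
in absolute value uniformly as `ζ → −∞`: the quadratic form of `Ĥ(ζ)²` dominates any
multiple `M` of the `L²` norm for `ζ` sufficiently negative. -/
theorem eigenvalues_blow_up_at_minus_infinity
    (Bm Bp mm mp Vm Vp : ℝ) (hBm : Bm < 0) (hBp : 0 < Bp)
    (B m V : ℝ → ℝ) (hB : IsSwitch Bm Bp B) (hm : IsSwitch mm mp m)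
    (hV : IsSwitch Vm Vp V)
    (A₂ : ℝ → ℝ) (hA₂ : ∀ x, A₂ x = x * B x) :
    ∀ M : ℝ, 0 < M → ∃ ζ₀ : ℝ, ∀ ζ : ℝ, ζ ≤ ζ₀ →
      ∀ ψ₁ ψ₂ : ℝ → ℂ, ContDiff ℝ (⊤ : ℕ∞) ψ₁ → ContDiff ℝ (⊤ : ℕ∞) ψ₂ →
        HasCompactSupport ψ₁ → HasCompactSupport ψ₂ →
        ∀ u v : ℝ → ℂ,
          (∀ x, u x = -Complex.I * deriv ψ₂ x
            - Complex.I * ((ζ : ℂ) - (A₂ x : ℂ)) * ψ₂ x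
            + ((V x : ℂ) + (m x : ℂ)) * ψ₁ x) →
          (∀ x, v x = -Complex.I * deriv ψ₁ x
            + Complex.I * ((ζ : ℂ) - (A₂ x : ℂ)) * ψ₁ x
            + ((V x : ℂ) - (m x : ℂ)) * ψ₂ x) →
          M * ∫ x : ℝ, (‖ψ₁ x‖ ^ 2 + ‖ψ₂ x‖ ^ 2) ≤
            ∫ x : ℝ, (‖u x‖ ^ 2 + ‖v x‖ ^ 2) := by
  intro M hM
  obtain ⟨Km, hKm0, hKm⟩ := switch_bdd hm
  obtain ⟨KV, hKV0, hKV⟩ := switch_bdd hV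
  obtain ⟨C, hC⟩ := A_lower hBm hBp hB
  obtain ⟨L, hL0, hL⟩ := A_deriv hB
  have hAe : A₂ = fun x => x * B x := funext hA₂
  rw [← hAe] at hL
  have hAs : ContDiff ℝ (⊤ : ℕ∞) A₂ := by rw [hAe]; exact contDiff_id.mul hB.1
  set K := KV + Km with hK
  set R := 1 + L + 2 * K ^ 2 + 2 * M with hR
  have hR1 : 1 ≤ R := by nlinarith [sq_nonneg K]
  refine ⟨-C - R, ?_⟩
  intro ζ hζ ψ₁ ψ₂ h1 h2 c1 c2 u v hu hv
  have hmc := hm.1.continuous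
  have hVc := hV.1.continuous
  have hAc := hAs.continuous
  have d1 : Continuous (deriv ψ₁) := h1.continuous_deriv (by simp)
  have d2 : Continuous (deriv ψ₂) := h2.continuous_deriv (by simp)
  have k1 := h1.continuous
  have k2 := h2.continuous
  have huc : Continuous u := by rw [funext hu]; fun_prop
  have hvc : Continuous v := by rw [funext hv]; fun_prop
  have hus : HasCompactSupport u := by
    rw [funext hu]
    exact ((c2.deriv.mul_left).sub c2.mul_left).add c1.mul_left
  have hvs : HasCompactSupport v := by
    rw [funext hv]
    exact ((c1.deriv.mul_left).add c1.mul_left).add c2.mul_left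
  have nsq : ∀ f : ℝ → ℂ, HasCompactSupport f → HasCompactSupport (fun x => ‖f x‖ ^ 2) :=
    fun f hf => hf.comp_left (g := fun z : ℂ => ‖z‖ ^ 2) (by simp)
  set g : ℝ → ℝ := fun x => (ζ - A₂ x) * (‖ψ₂ x‖ ^ 2 - ‖ψ₁ x‖ ^ 2) with hg
  have hgs : ContDiff ℝ (⊤ : ℕ∞) g :=
    (contDiff_const.sub hAs).mul ((h2.norm_sq ℝ).sub (h1.norm_sq ℝ))
  have hgc : HasCompactSupport g := ((nsq _ c2).sub (nsq _ c1)).mul_left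
  have hdgc : Continuous (deriv g) := hgs.continuous_deriv (by simp)
  have hgd : Differentiable ℝ g := hgs.differentiable (by simp)
  have ig : Integrable (deriv g) := hdgc.integrable_of_hasCompactSupport hgc.deriv
  have ig0 : Integrable g := hgs.continuous.integrable_of_hasCompactSupport hgc
  have z : ∫ x, deriv g x = 0 :=
    integral_eq_zero_of_hasDerivAt_of_integrable (fun x => (hgd x).hasDerivAt) ig ig0
  have iψ : Integrable (fun x => ‖ψ₁ x‖ ^ 2 + ‖ψ₂ x‖ ^ 2) :=
    (by fun_prop : Continuous _).integrable_of_hasCompactSupport ((nsq _ c1).add (nsq _ c2))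
  have iuv : Integrable (fun x => ‖u x‖ ^ 2 + ‖v x‖ ^ 2) :=
    (by fun_prop : Continuous _).integrable_of_hasCompactSupport ((nsq _ hus).add (nsq _ hvs))
  have key : ∫ x, (M * (‖ψ₁ x‖ ^ 2 + ‖ψ₂ x‖ ^ 2) + 1 / 2 * deriv g x) ≤
      ∫ x, (‖u x‖ ^ 2 + ‖v x‖ ^ 2) := by
    refine integral_mono ((iψ.const_mul M).add (ig.const_mul _)) iuv fun x => ?_
    have e1 : HasDerivAt ψ₁ (deriv ψ₁ x) x := (h1.differentiable (by simp) x).hasDerivAt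
    have e2 : HasDerivAt ψ₂ (deriv ψ₂ x) x := (h2.differentiable (by simp) x).hasDerivAt
    have e3 : HasDerivAt A₂ (deriv A₂ x) x := (hAs.differentiable (by simp) x).hasDerivAt
    have e4 := ((e3.const_sub ζ).mul (e2.norm_sq.sub e1.norm_sq)).deriv
    change deriv g x = _ at e4
    have b1 : |V x + m x| ≤ K := (abs_add_le _ _).trans (add_le_add (hKV x) (hKm x))
    have b2 : |V x - m x| ≤ K := (abs_sub _ _).trans (add_le_add (hKV x) (hKm x))
    have p1 := pt_bound (ψ₂ x) (deriv ψ₂ x) (ψ₁ x) (ζ - A₂ x) (V x + m x) K b1 (u x)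
      (by rw [hu]; push_cast; ring)
    have p2 := pt_bound (ψ₁ x) (deriv ψ₁ x) (ψ₂ x) (-(ζ - A₂ x)) (V x - m x) K b2 (v x)
      (by rw [hv]; push_cast; ring)
    have hw : R ≤ -(ζ - A₂ x) := by have := hC x; rw [hA₂]; linarith
    have hw2 : R ≤ (ζ - A₂ x) ^ 2 := by nlinarith
    have hLx := abs_le.1 (hL x)
    simp only [Pi.sub_apply] at e4
    show M * (‖ψ₁ x‖ ^ 2 + ‖ψ₂ x‖ ^ 2) + 1 / 2 * deriv g x ≤ ‖u x‖ ^ 2 + ‖v x‖ ^ 2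
    rw [e4]
    have n1 := sq_nonneg ‖ψ₁ x‖
    have n2 := sq_nonneg ‖ψ₂ x‖
    have f1 : 0 ≤ ((ζ - A₂ x) ^ 2 - L - 2 * K ^ 2 - 2 * M) * (‖ψ₁ x‖ ^ 2 + ‖ψ₂ x‖ ^ 2) :=
      mul_nonneg (by linarith) (by linarith)
    have f2 := mul_nonneg (by linarith [hLx.1] : 0 ≤ L + deriv A₂ x) n2
    have f3 := mul_nonneg (by linarith [hLx.2] : 0 ≤ L - deriv A₂ x) n1
    nlinarith
  rw [integral_add (iψ.const_mul M) (ig.const_mul _), integral_const_mul, integral_const_mul, z] at key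
  linarith
end

section
/- Let 𝓗 be a complex Hilbert space, let H₀ be a self-adjoint operator with dense domain D ⊆ 𝓗 (so that i + H₀ and i − H₀ map D bijectively onto 𝓗 with bounded inverses (i ± H₀)⁻¹ : 𝓗 → D), and let W : D → 𝓗 be a linear map that is symmetric, i.e. ⟪W u, v⟫ = ⟪u, W v⟫ for all u, v ∈ D. Assume that both compositions (i + H₀)⁻¹ ∘ W and (i − H₀)⁻¹ ∘ W, initially defined on D, extend to compact operators on 𝓗. Then the operator H₀ + W with domain D is self-adjoint. -/
open scoped ComplexInnerProductSpace

theorem aux_adjoint_compact {E : Type*} [NormedAddCommGroup E] [InnerProductSpace ℂ E]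
    [CompleteSpace E] (K : E →L[ℂ] E) (hK : IsCompactOperator (⇑K)) :
    IsCompactOperator (⇑(ContinuousLinearMap.adjoint K)) := by
  set L := ContinuousLinearMap.adjoint K with hL
  have hc : IsCompactOperator (⇑(K.comp L)) := hK.comp_clm L
  have h1 := (isCompactOperator_iff_isCompact_closure_image_ball
    ((K.comp L : E →L[ℂ] E) : E →ₗ[ℂ] E) one_pos).1 hc
  have h2 : TotallyBounded (⇑(K.comp L) '' Metric.ball 0 1) :=
    h1.totallyBounded.subset subset_closure
  refine (isCompactOperator_iff_isCompact_closure_image_ball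
    (L : E →ₗ[ℂ] E) one_pos).2 ?_
  refine TotallyBounded.isCompact_of_isClosed (TotallyBounded.closure ?_) isClosed_closure
  rw [Metric.totallyBounded_iff]
  intro ε hε
  obtain ⟨t, hts, htf, hcov⟩ := Metric.finite_approx_of_totallyBounded h2 (ε ^ 2 / 2) (by positivity)
  obtain ⟨s, hs, hsf, rfl⟩ := Set.exists_subset_image_finite_and.1 ⟨t, hts, htf, rfl⟩
  refine ⟨L '' s, hsf.image _, ?_⟩
  rintro _ ⟨x, hx, rfl⟩
  have := hcov ⟨x, hx, rfl⟩
  simp only [Set.mem_iUnion, Set.mem_image, exists_prop, Metric.mem_ball] at this ⊢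
  obtain ⟨_, ⟨y, hy, rfl⟩, hd⟩ := this
  refine ⟨_, ⟨y, hy, rfl⟩, ?_⟩
  have hyb := hs hy
  rw [mem_ball_zero_iff] at hx hyb
  change dist (L x) (L y) < ε
  rw [dist_eq_norm, ← map_sub] at hd ⊢
  have h3 : ‖x - y‖ ≤ 2 := (norm_sub_le _ _).trans (by linarith)
  have h4 : ‖L (x - y)‖ ^ 2 ≤ ‖x - y‖ * ‖(K.comp L) (x - y)‖ := by
    have : ⟪x - y, K (L (x - y))⟫ = ⟪L (x - y), L (x - y)⟫ := by
      rw [hL, ContinuousLinearMap.adjoint_inner_left]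
    rw [inner_self_eq_norm_sq_to_K] at this
    have h5 := norm_inner_le_norm (𝕜 := ℂ) (x - y) (K (L (x - y)))
    rw [this] at h5
    simpa using h5
  have h6 : ‖L (x - y)‖ ^ 2 < ε ^ 2 := by
    nlinarith [norm_nonneg ((K.comp L) (x - y)), norm_nonneg (x - y)]
  exact lt_of_pow_lt_pow_left₀ 2 hε.le h6

theorem aux_surj {E : Type*} [NormedAddCommGroup E] [InnerProductSpace ℂ E]
    [CompleteSpace E] (D : Submodule ℂ E) (hD : Dense (D : Set E)) (A W : D →ₗ[ℂ] E)
    (hA : ∀ u v : D, ⟪A u, (v : E)⟫ = ⟪(u : E), A v⟫)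
    (hW : ∀ u v : D, ⟪W u, (v : E)⟫ = ⟪(u : E), W v⟫)
    (R R' : E → E)
    (hR : ∀ v : E, ∃ hv : R v ∈ D, Complex.I • (R v) + A ⟨R v, hv⟩ = v)
    (hR' : ∀ v : E, ∃ hv : R' v ∈ D, Complex.I • (R' v) - A ⟨R' v, hv⟩ = v)
    (K : E →L[ℂ] E) (hK : IsCompactOperator (⇑K))
    (hK' : ∀ u : D, K (u : E) = R' (W u)) (w : E) :
    ∃ u : D, Complex.I • (u : E) + (A u + W u) = w := by
  choose hRm hR using hR
  choose hRm' hR' using hR'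
  set L := ContinuousLinearMap.adjoint K with hL
  have hLc : IsCompactOperator (⇑L) := aux_adjoint_compact K hK
  have hadj : ∀ x y, ⟪R' x, y⟫ = -⟪x, R y⟫ := by
    intro x y
    have h := hA ⟨R' x, hRm' x⟩ ⟨R y, hRm y⟩
    conv_lhs => rw [← hR y]
    conv_rhs => rw [← hR' x]
    simp only at h
    rw [inner_add_right, inner_sub_left, inner_smul_left, inner_smul_right, h]
    simp only [Complex.conj_I]
    ring
  have hLW : ∀ v, L v = -W ⟨R v, hRm v⟩ := by
    intro v
    refine hD.eq_of_inner_right ℂ fun u hu => ?_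
    rw [hL, ContinuousLinearMap.adjoint_inner_right, hK' ⟨u, hu⟩, hadj, inner_neg_right]
    rw [hW ⟨u, hu⟩ ⟨R v, hRm v⟩]
  have hinj : ∀ b : D, Complex.I • (b : E) + (A b + W b) = 0 → (b : E) = 0 := by
    intro b hb
    have e1 : A b + W b = -(Complex.I • (b : E)) := eq_neg_of_add_eq_zero_right hb
    have e2 : ⟪A b + W b, (b : E)⟫ = ⟪(b : E), A b + W b⟫ := by
      rw [inner_add_left, inner_add_right, hA, hW]
    rw [e1, inner_neg_left, inner_neg_right, inner_smul_left, inner_smul_right] at e2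
    simp only [Complex.conj_I] at e2
    have e3 : Complex.I * ⟪(b : E), (b : E)⟫ = 0 := by linear_combination e2 / 2
    simpa using e3
  have hne : ¬ Module.End.HasEigenvalue (L : Module.End ℂ E) (1 : ℂ) := by
    intro h
    obtain ⟨v, hv⟩ := h.exists_hasEigenvector
    apply hv.2
    have hv1 : L v = v := by simpa using hv.apply_eq_smul
    have h0 := hinj ⟨R v, hRm v⟩ (by
      rw [← add_assoc, hR v, ← sub_neg_eq_add, ← hLW, hv1, sub_self])
    have h0' : (⟨R v, hRm v⟩ : D) = 0 := Subtype.ext h0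
    rw [← hv1, hLW, h0', map_zero, neg_zero]
  have hres := (hLc.hasEigenvalue_or_mem_resolventSet one_ne_zero).resolve_left hne
  rw [spectrum.mem_resolventSet_iff] at hres
  obtain ⟨U, hU⟩ := hres
  have hUw : (U : E →L[ℂ] E) ((↑U⁻¹ : E →L[ℂ] E) w) = w := by
    rw [← mul_apply_eq_comp, Units.mul_inv]; rfl
  set v := (↑U⁻¹ : E →L[ℂ] E) w
  refine ⟨⟨R v, hRm v⟩, ?_⟩
  rw [← add_assoc, hR v, ← sub_neg_eq_add, ← hLW, ← hUw, hU]
  simp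

/-- If `H₀` is self-adjoint with dense domain `D`, with bounded resolvents
`R₊ = (i + H₀)⁻¹` and `R₋ = (i − H₀)⁻¹`, and `W : D → 𝓗` is symmetric with
`(i ± H₀)⁻¹ W` extending to compact operators on `𝓗`, then `H₀ + W` with domain `D`
is self-adjoint. -/
theorem selfAdjoint_add_relatively_compact_perturbation
    {𝓗 : Type*} [NormedAddCommGroup 𝓗] [InnerProductSpace ℂ 𝓗] [CompleteSpace 𝓗]
    (H₀ : 𝓗 →ₗ.[ℂ] 𝓗) (hdense : Dense (H₀.domain : Set 𝓗))
    (hH₀ : IsSelfAdjoint H₀)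
    (Rp Rm : 𝓗 →L[ℂ] 𝓗)
    (hRp : ∀ u : H₀.domain, Rp (Complex.I • (u : 𝓗) + H₀ u) = u)
    (hRp' : ∀ v : 𝓗, ∃ hv : Rp v ∈ H₀.domain,
      Complex.I • (Rp v) + H₀ ⟨Rp v, hv⟩ = v)
    (hRm : ∀ u : H₀.domain, Rm (Complex.I • (u : 𝓗) - H₀ u) = u)
    (hRm' : ∀ v : 𝓗, ∃ hv : Rm v ∈ H₀.domain,
      Complex.I • (Rm v) - H₀ ⟨Rm v, hv⟩ = v)
    (W : H₀.domain →ₗ[ℂ] 𝓗)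
    (hW : ∀ u v : H₀.domain, ⟪W u, (v : 𝓗)⟫ = ⟪(u : 𝓗), W v⟫)
    (Kp Km : 𝓗 →L[ℂ] 𝓗)
    (hKp : IsCompactOperator (⇑Kp)) (hKm : IsCompactOperator (⇑Km))
    (hKp' : ∀ u : H₀.domain, Kp (u : 𝓗) = Rp (W u))
    (hKm' : ∀ u : H₀.domain, Km (u : 𝓗) = Rm (W u)) :
    IsSelfAdjoint ({ domain := H₀.domain, toFun := H₀.toFun + W } : 𝓗 →ₗ.[ℂ] 𝓗) := by
  have hsym : ∀ u v : H₀.domain, ⟪H₀ u, (v : 𝓗)⟫ = ⟪(u : 𝓗), H₀ v⟫ := by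
    have h := LinearPMap.adjoint_isFormalAdjoint hdense
    rw [LinearPMap.isSelfAdjoint_def.1 hH₀] at h
    exact h
  have hp := aux_surj H₀.domain hdense H₀.toFun W hsym hW Rp Rm hRp' hRm' Km hKm hKm'
  have hm := aux_surj H₀.domain hdense (-H₀.toFun) (-W)
    (fun u v => by
      simp only [LinearMap.neg_apply, inner_neg_left, inner_neg_right]
      exact congrArg _ (hsym u v))
    (fun u v => by simp only [LinearMap.neg_apply, inner_neg_left, inner_neg_right, hW])
    Rm Rp
    (fun v => by
      obtain ⟨h1, h2⟩ := hRm' v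
      exact ⟨h1, by rw [LinearMap.neg_apply, ← sub_eq_add_neg]; exact h2⟩)
    (fun v => by
      obtain ⟨h1, h2⟩ := hRp' v
      exact ⟨h1, by rw [LinearMap.neg_apply, sub_neg_eq_add]; exact h2⟩)
    (-Kp) hKp.neg (fun u => by simp [hKp'])
  set T : 𝓗 →ₗ.[ℂ] 𝓗 := { domain := H₀.domain, toFun := H₀.toFun + W } with hT
  have hTd : Dense (T.domain : Set 𝓗) := hdense
  have hTs : T.IsFormalAdjoint T := by
    intro u v
    change ⟪H₀ u + W u, (v : 𝓗)⟫ = ⟪(u : 𝓗), H₀ v + W v⟫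
    rw [inner_add_left, inner_add_right, hsym, hW]
  have hle : T ≤ T.adjoint := hTs.le_adjoint hTd
  rw [LinearPMap.isSelfAdjoint_def]
  symm
  refine LinearPMap.eq_of_le_of_domain_eq hle (le_antisymm hle.1 ?_)
  intro y hy
  obtain ⟨u, hu⟩ := hp (Complex.I • y + T.adjoint ⟨y, hy⟩)
  have hfa := LinearPMap.adjoint_isFormalAdjoint hTd
  obtain ⟨x, hx⟩ := hm (y - u)
  have key : ∀ x : H₀.domain, ⟪y - u, Complex.I • (x : 𝓗) + (-(H₀ x) + -(W x))⟫ = 0 := by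
    intro x
    have e1 : ⟪T.adjoint ⟨y, hy⟩, (x : 𝓗)⟫ = ⟪y, H₀ x + W x⟫ := hfa ⟨y, hy⟩ x
    have e2 : ⟪H₀ u + W u, (x : 𝓗)⟫ = ⟪(u : 𝓗), H₀ x + W x⟫ := hTs u x
    have e3 : ⟪Complex.I • (u : 𝓗) + (H₀ u + W u), (x : 𝓗)⟫
        = ⟪Complex.I • y + T.adjoint ⟨y, hy⟩, (x : 𝓗)⟫ := congrArg (fun z => ⟪z, (x : 𝓗)⟫) hu
    rw [inner_add_left (Complex.I • (u : 𝓗)), inner_add_left (Complex.I • y), e1, e2, inner_smul_left, inner_smul_left] at e3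
    simp only [Complex.conj_I] at e3
    rw [← neg_add, inner_add_right, inner_smul_right, inner_neg_right, inner_sub_left,
      inner_sub_left]
    linear_combination e3
  have hz := key x
  have hx' : Complex.I • (x : 𝓗) + (-(H₀ x) + -(W x)) = y - u := hx
  rw [hx', inner_self_eq_zero, sub_eq_zero] at hz
  rw [hz]
  exact u.2
end

section
/- Let 𝓗 be a complex Hilbert space, let H₀ be a self-adjoint operator with dense domain D ⊆ 𝓗 (so that i + H₀ and i − H₀ map D bijectively onto 𝓗 with bounded inverses (i ± H₀)⁻¹ : 𝓗 → D), and let W : D → 𝓗 be a linear map that is symmetric, i.e. ⟪W u, v⟫ = ⟪u, W v⟫ for all u, v ∈ D. Assume that the compositions (i + H₀)⁻¹ ∘ W and (i − H₀)⁻¹ ∘ W, initially defined on D, extend to bounded operators T₊ and T₋ on 𝓗. Then for every real number μ ≥ 0 with μ·‖T₊‖ < 1 and μ·‖T₋‖ < 1, the operators i + (H₀ + μW) and i − (H₀ + μW) map D bijectively onto 𝓗, and the operator H₀ + μW with domain D is self-adjoint. -/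
open scoped ComplexInnerProductSpace

theorem aux_bij_one_add {𝓗 : Type*} [NormedAddCommGroup 𝓗] [InnerProductSpace ℂ 𝓗]
    [CompleteSpace 𝓗] (A : 𝓗 →L[ℂ] 𝓗) (hA : ‖A‖ < 1) :
    Function.Bijective (fun v => v - A v) := by
  have h := (isUnit_one_sub_of_norm_lt_one hA)
  rw [ContinuousLinearMap.isUnit_iff_bijective] at h
  exact h

/-- If `H₀` is self-adjoint with dense domain `D`, with bounded resolvents
`R₊ = (i + H₀)⁻¹` and `R₋ = (i − H₀)⁻¹`, and `W : D → 𝓗` is symmetric with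
`(i ± H₀)⁻¹ W` extending to bounded operators `T₊`, `T₋` on `𝓗`, then for every
`μ ≥ 0` with `μ‖T₊‖ < 1` and `μ‖T₋‖ < 1`, the operators `i ± (H₀ + μW)` map `D`
bijectively onto `𝓗`, and `H₀ + μW` with domain `D` is self-adjoint. -/
theorem selfAdjoint_add_small_perturbation
    {𝓗 : Type*} [NormedAddCommGroup 𝓗] [InnerProductSpace ℂ 𝓗] [CompleteSpace 𝓗]
    (H₀ : 𝓗 →ₗ.[ℂ] 𝓗) (hdense : Dense (H₀.domain : Set 𝓗))
    (hH₀ : IsSelfAdjoint H₀)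
    (Rp Rm : 𝓗 →L[ℂ] 𝓗)
    (hRp : ∀ u : H₀.domain, Rp (Complex.I • (u : 𝓗) + H₀ u) = u)
    (hRp' : ∀ v : 𝓗, ∃ hv : Rp v ∈ H₀.domain,
      Complex.I • (Rp v) + H₀ ⟨Rp v, hv⟩ = v)
    (hRm : ∀ u : H₀.domain, Rm (Complex.I • (u : 𝓗) - H₀ u) = u)
    (hRm' : ∀ v : 𝓗, ∃ hv : Rm v ∈ H₀.domain,
      Complex.I • (Rm v) - H₀ ⟨Rm v, hv⟩ = v)
    (W : H₀.domain →ₗ[ℂ] 𝓗)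
    (hW : ∀ u v : H₀.domain, ⟪W u, (v : 𝓗)⟫ = ⟪(u : 𝓗), W v⟫)
    (Tp Tm : 𝓗 →L[ℂ] 𝓗)
    (hTp : ∀ u : H₀.domain, Tp (u : 𝓗) = Rp (W u))
    (hTm : ∀ u : H₀.domain, Tm (u : 𝓗) = Rm (W u))
    (μ : ℝ) (hμ : 0 ≤ μ) (hμp : μ * ‖Tp‖ < 1) (hμm : μ * ‖Tm‖ < 1) :
    Function.Bijective
        (fun u : H₀.domain => Complex.I • (u : 𝓗) + (H₀ u + (μ : ℂ) • W u)) ∧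
      Function.Bijective
        (fun u : H₀.domain => Complex.I • (u : 𝓗) - (H₀ u + (μ : ℂ) • W u)) ∧
      IsSelfAdjoint
        ({ domain := H₀.domain, toFun := H₀.toFun + (μ : ℂ) • W } : 𝓗 →ₗ.[ℂ] 𝓗) := by
  have hs : ∀ x y : H₀.domain, ⟪H₀ x, (y : 𝓗)⟫ = ⟪(x : 𝓗), H₀ y⟫ := by
    have h := LinearPMap.adjoint_isFormalAdjoint hdense
    rw [LinearPMap.isSelfAdjoint_def.1 hH₀] at h
    exact fun x y => h x y
  have hR : ∀ a b : 𝓗, ⟪Rp a, b⟫ = -⟪a, Rm b⟫ := by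
    intro a b
    obtain ⟨ha, ha'⟩ := hRp' a
    obtain ⟨hb, hb'⟩ := hRm' b
    have h1 : ⟪Rp a, b⟫ = ⟪Rp a, Complex.I • (Rm b) - H₀ ⟨Rm b, hb⟩⟫ := by rw [hb']
    have h2 : ⟪a, Rm b⟫ = ⟪Complex.I • (Rp a) + H₀ ⟨Rp a, ha⟩, Rm b⟫ := by rw [ha']
    have h3 := hs ⟨Rp a, ha⟩ ⟨Rm b, hb⟩
    simp only at h3
    rw [h1, h2, inner_sub_right, inner_add_left, inner_smul_left, inner_smul_right, h3]
    simp only [Complex.conj_I]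
    ring
  have hR' : ∀ a b : 𝓗, ⟪Rm a, b⟫ = -⟪a, Rp b⟫ := by
    intro a b
    rw [← inner_conj_symm, ← inner_conj_symm a, hR b a]
    simp
  have hAp : ∀ u : H₀.domain,
      ContinuousLinearMap.adjoint Tp (Complex.I • (u : 𝓗) - H₀ u) = - W u := by
    intro u
    refine hdense.eq_of_inner_right (𝕜 := ℂ) fun x hx => ?_
    rw [ContinuousLinearMap.adjoint_inner_right, hTp ⟨x, hx⟩, hR, hRm, hW, inner_neg_right]
  have hAm : ∀ u : H₀.domain,
      ContinuousLinearMap.adjoint Tm (Complex.I • (u : 𝓗) + H₀ u) = - W u := by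
    intro u
    refine hdense.eq_of_inner_right (𝕜 := ℂ) fun x hx => ?_
    rw [ContinuousLinearMap.adjoint_inner_right, hTm ⟨x, hx⟩, hR', hRp, hW, inner_neg_right]
  have b1 : Function.Bijective (fun u : H₀.domain => Complex.I • (u : 𝓗) + H₀ u) := by
    refine ⟨fun u v h => Subtype.ext ?_, fun v => ?_⟩
    · rw [← hRp u, ← hRp v]; exact congrArg Rp h
    · obtain ⟨hv, h⟩ := hRp' v
      exact ⟨⟨_, hv⟩, h⟩
  have b2 : Function.Bijective (fun u : H₀.domain => Complex.I • (u : 𝓗) - H₀ u) := by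
    refine ⟨fun u v h => Subtype.ext ?_, fun v => ?_⟩
    · rw [← hRm u, ← hRm v]; exact congrArg Rm h
    · obtain ⟨hv, h⟩ := hRm' v
      exact ⟨⟨_, hv⟩, h⟩
  have c1 : Function.Bijective
        (fun u : H₀.domain => Complex.I • (u : 𝓗) + (H₀ u + (μ : ℂ) • W u)) := by
    have h := (aux_bij_one_add ((μ : ℂ) • ContinuousLinearMap.adjoint Tm) (by
      rw [norm_smul, LinearIsometryEquiv.norm_map, Complex.norm_real, Real.norm_of_nonneg hμ]
      exact hμm)).comp b1
    convert h using 2 with u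
    simp only [Function.comp, ContinuousLinearMap.smul_apply, hAm, smul_neg]
    abel
  have c2 : Function.Bijective
        (fun u : H₀.domain => Complex.I • (u : 𝓗) - (H₀ u + (μ : ℂ) • W u)) := by
    have h := (aux_bij_one_add (-((μ : ℂ) • ContinuousLinearMap.adjoint Tp)) (by
      rw [norm_neg, norm_smul, LinearIsometryEquiv.norm_map, Complex.norm_real,
        Real.norm_of_nonneg hμ]
      exact hμp)).comp b2
    convert h using 2 with u
    simp only [Function.comp, ContinuousLinearMap.neg_apply, ContinuousLinearMap.smul_apply, hAp,
      smul_neg]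
    abel
  refine ⟨c1, c2, ?_⟩
  set S : 𝓗 →ₗ.[ℂ] 𝓗 := { domain := H₀.domain, toFun := H₀.toFun + (μ : ℂ) • W } with hS
  have hSa : ∀ u : H₀.domain, S u = H₀ u + (μ : ℂ) • W u := fun u => rfl
  have hSd : Dense (S.domain : Set 𝓗) := hdense
  have hsym : S.IsFormalAdjoint S := by
    intro x y
    change ⟪H₀ x + (μ : ℂ) • W x, (y : 𝓗)⟫ = ⟪(x : 𝓗), H₀ y + (μ : ℂ) • W y⟫
    rw [inner_add_left, inner_add_right, inner_smul_left, inner_smul_right, hs x y, hW x y,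
      Complex.conj_ofReal]
  have hle := LinearPMap.IsFormalAdjoint.le_adjoint hSd hsym
  rw [LinearPMap.isSelfAdjoint_def]
  refine (LinearPMap.eq_of_le_of_domain_eq hle (le_antisymm hle.1 ?_)).symm
  intro y hy
  obtain ⟨u, hu⟩ := c1.2 (Complex.I • y + S.adjoint ⟨y, hy⟩)
  have hu' : Complex.I • (u : 𝓗) + S u = Complex.I • y + S.adjoint ⟨y, hy⟩ := hu
  have key : ∀ w : H₀.domain, ⟪y - u, Complex.I • (w : 𝓗) - (H₀ w + (μ : ℂ) • W w)⟫ = 0 := by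
    intro w
    have e1 : ⟪S.adjoint ⟨y, hy⟩, (w : 𝓗)⟫ = ⟪y, S w⟫ :=
      LinearPMap.adjoint_isFormalAdjoint hSd ⟨y, hy⟩ w
    have e2 : ⟪S u, (w : 𝓗)⟫ = ⟪(u : 𝓗), S w⟫ := hsym u w
    have e3 := congrArg (fun z => ⟪z, (w : 𝓗)⟫) hu'
    simp only [inner_add_left, inner_smul_left, e1, e2, Complex.conj_I] at e3
    rw [← hSa, inner_sub_left, inner_sub_right, inner_sub_right, inner_smul_right,
      inner_smul_right]
    linear_combination e3
  obtain ⟨w, hw⟩ := c2.2 (y - u)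
  have k := key w
  have hw' : Complex.I • (w : 𝓗) - (H₀ w + (μ : ℂ) • W w) = y - u := hw
  rw [hw', inner_self_eq_zero, sub_eq_zero] at k
  rw [k]
  exact u.2
end
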